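/- arXiv:2509.00556 — 2 statements merged into one kernel-verified Lean document; each statement's English description precedes it below -/
import Mathlib

section
/- Let S be a finite set, let 𝒱 be a linear subspace of 𝒫(S) under symmetric difference over 𝔽₂ with dim(𝒱) = r, and let X₁, …, X_r and Y₁, …, Y_r be bases of 𝒱. If a, a', b, b' ∈ 𝔽₂^r are such that v_X(a) = v_Y(a') and v_X(b) = v_Y(b') and both of these Venn regions are nonempty, then v_X(a + b) = v_Y(a' + b'); i.e., the addition induced on the Venn regions of S via coordinates is independent of the choice of basis for 𝒱. -/
/-!
Evaluation at a point `x`, `A ↦ [x ∈ A] ∈ 𝔽₂`, is linear for symmetric difference, and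
`x ∈ v_X(a)` says exactly that `x ∈ S` and this functional takes the value `a i` at each `X i`.
Choose `x ∈ v_X(a)` and `y ∈ v_X(b)`. Then `w ∈ S` lies in `v_X(a + b)` iff evaluation at `w`
agrees with the sum of the evaluations at `x` and `y` on every `X i`, equivalently, by
linearity, on the whole span of the `X i`. The latter condition depends only on the span, and
`x`, `y` serve equally for `Y`, `a'`, `b'`.
-/

open scoped symmDiff

/-- `zSet X a` is the symmetric difference of the sets `X i` over the indices `i` with
`a i = 1` (with `zSet X 0 = ∅`). -/
def zSet {α : Type*} [DecidableEq α] {r : ℕ} (X : Fin r → Finset α)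
    (a : Fin r → ZMod 2) : Finset α :=
  (Finset.univ.filter (fun i => a i = 1)).fold (· ∆ ·) ∅ X

/-- The Venn region of `S` with respect to `X₁, …, X_r` determined by `a ∈ 𝔽₂^r`. -/
def vennRegion {α : Type*} [DecidableEq α] {r : ℕ} (S : Finset α)
    (X : Fin r → Finset α) (a : Fin r → ZMod 2) : Finset α :=
  S.filter (fun x => ∀ i, x ∈ X i ↔ a i = 1)

section Span

variable {α M : Type*} [DecidableEq α] {r : ℕ} (X : Fin r → Finset α)

lemma zSet_single (i : Fin r) : zSet X (Pi.single i 1) = X i := by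
  have support_single : Finset.univ.filter
      (fun j => (Pi.single i 1 : Fin r → ZMod 2) j = 1) = {i} := by
    ext j
    by_cases hj : j = i <;> simp [hj]
  rw [zSet, support_single, Finset.fold_singleton]
  exact symmDiff_bot (X i)

variable [AddCommGroup M] {f g : Finset α → M}

lemma map_zSet (hf : ∀ A B, f (A ∆ B) = f A + f B) (c : Fin r → ZMod 2) :
    f (zSet X c) = ∑ i with c i = 1, f (X i) := by
  have map_empty : f ∅ = 0 := by simpa using hf ∅ ∅
  rw [zSet, ← Finset.fold_hom hf, map_empty, Finset.sum_eq_fold]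

lemma eqOn_range_zSet_iff (hf : ∀ A B, f (A ∆ B) = f A + f B)
    (hg : ∀ A B, g (A ∆ B) = g A + g B) :
    Set.EqOn f g (Set.range (zSet X)) ↔ ∀ i, f (X i) = g (X i) := by
  constructor
  · intro h i
    exact h ⟨Pi.single i 1, zSet_single X i⟩
  · rintro h _ ⟨c, rfl⟩
    simp only [map_zSet X hf, map_zSet X hg, h]

end Span

/-- Evaluation at `x`: the functional `A ↦ [x ∈ A]` on the `𝔽₂`-vector space of finite sets,
through which membership in a Venn region becomes a system of linear equations. -/
def evalAt {α : Type*} [DecidableEq α] (x : α) (A : Finset α) : ZMod 2 :=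
  if x ∈ A then 1 else 0

section VennRegion

variable {α : Type*} [DecidableEq α]

lemma evalAt_symmDiff (x : α) (A B : Finset α) :
    evalAt x (A ∆ B) = evalAt x A + evalAt x B := by
  by_cases hA : x ∈ A <;> by_cases hB : x ∈ B <;>
    simp [evalAt, Finset.mem_symmDiff, hA, hB, CharTwo.add_self_eq_zero]

lemma evalAt_eq_iff {x : α} {A : Finset α} {t : ZMod 2} :
    evalAt x A = t ↔ (x ∈ A ↔ t = 1) := by
  by_cases hx : x ∈ A <;> simp only [evalAt, hx, if_true, if_false, true_iff, false_iff] <;>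
    decide +revert

variable {r : ℕ} {S : Finset α} {X : Fin r → Finset α} {a b : Fin r → ZMod 2}

lemma mem_vennRegion_iff {x : α} :
    x ∈ vennRegion S X a ↔ x ∈ S ∧ ∀ i, evalAt x (X i) = a i := by
  simp only [vennRegion, Finset.mem_filter, evalAt_eq_iff]

lemma mem_vennRegion_add_iff {x y w : α}
    (hx : x ∈ vennRegion S X a) (hy : y ∈ vennRegion S X b) :
    w ∈ vennRegion S X (a + b) ↔
      w ∈ S ∧ Set.EqOn (evalAt w) (evalAt x + evalAt y) (Set.range (zSet X)) := by
  have sum_symmDiff (A B : Finset α) :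
      (evalAt x + evalAt y) (A ∆ B) = (evalAt x + evalAt y) A + (evalAt x + evalAt y) B := by
    simp only [Pi.add_apply, evalAt_symmDiff, add_add_add_comm]
  rw [mem_vennRegion_iff] at hx hy
  simp only [mem_vennRegion_iff, eqOn_range_zSet_iff X (evalAt_symmDiff w) sum_symmDiff,
    Pi.add_apply, hx.2, hy.2]

end VennRegion

theorem stmt_9_general {α : Type*} [DecidableEq α] (S : Finset α) {r s : ℕ}
    {X : Fin r → Finset α} {Y : Fin s → Finset α}
    (hspan : Set.range (zSet X) = Set.range (zSet Y))
    {a b : Fin r → ZMod 2} {a' b' : Fin s → ZMod 2}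
    (haa : vennRegion S X a = vennRegion S Y a')
    (hbb : vennRegion S X b = vennRegion S Y b')
    (hane : (vennRegion S X a).Nonempty)
    (hbne : (vennRegion S X b).Nonempty) :
    vennRegion S X (a + b) = vennRegion S Y (a' + b') := by
  obtain ⟨x, hx⟩ := hane
  obtain ⟨y, hy⟩ := hbne
  ext w
  rw [mem_vennRegion_add_iff hx hy, mem_vennRegion_add_iff (haa ▸ hx) (hbb ▸ hy), hspan]

/-- Let `S` be a finite set and `𝒱` a linear subspace of `𝒫(S)` under symmetric
difference over `𝔽₂` with bases `X₁, …, X_r` and `Y₁, …, Y_r`.  If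
`v_X(a) = v_Y(a')` and `v_X(b) = v_Y(b')` are nonempty Venn regions, then
`v_X(a + b) = v_Y(a' + b')`: the addition induced on the Venn regions via coordinates is
independent of the choice of basis for `𝒱`. -/
theorem stmt_9 {α : Type*} [DecidableEq α] (S : Finset α)
    (V : Finset (Finset α)) (r : ℕ) (X Y : Fin r → Finset α)
    (hVS : ∀ A ∈ V, A ⊆ S) (hV0 : (∅ : Finset α) ∈ V)
    (hVcl : ∀ A ∈ V, ∀ B ∈ V, A ∆ B ∈ V)
    (hXbasis : Set.range (zSet X) = ↑V ∧ Function.Injective (zSet X))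
    (hYbasis : Set.range (zSet Y) = ↑V ∧ Function.Injective (zSet Y))
    (a a' b b' : Fin r → ZMod 2)
    (haa : vennRegion S X a = vennRegion S Y a')
    (hbb : vennRegion S X b = vennRegion S Y b')
    (hane : (vennRegion S X a).Nonempty)
    (hbne : (vennRegion S X b).Nonempty) :
    vennRegion S X (a + b) = vennRegion S Y (a' + b') :=
  stmt_9_general S (hXbasis.1.trans hYbasis.1.symm) haa hbb hane hbne
end

section
/- Let S = B ⊔ D ⊆ 𝔽₂ⁿ be finite with affine basis B and D = S \ B, with |S| = k and dim(S) = d. Then the collection {X_w : w ∈ D} is a basis for E(S) as a vector space over 𝔽₂ under symmetric difference, and dim E(S) = k − (d + 1). -/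
/-!
Every `X_w` meets `D` in exactly `{w}`, so `△_{w ∈ D'} X_w` meets `D` in exactly `D'`, and `D'` can
be recovered from it. Conversely, for `Z ∈ E(S)` the set `Z ∆ △_{w ∈ Z ∩ D} X_w` lies in `E(S)` and
misses `D`; so it is an even zero-sum subset of the affinely independent set `B`, that is, an affine
dependence all of whose weights are `1`, and it must be empty. Hence `|E(S)| = 2 ^ |D|`.
-/

open scoped symmDiff

/-- Given, for each dependent point `w`, the even zero-sum set `X_w = {w} ∪ B_w`
(encoded by the function `ξ`), the sumset map sends a set `D'` of dependent points to the
symmetric difference `△_{w ∈ D'} X_w` (with `∅ ↦ ∅`). -/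
def sumsetMap {n : ℕ} (ξ : (Fin n → ZMod 2) → Finset (Fin n → ZMod 2))
    (D' : Finset (Fin n → ZMod 2)) : Finset (Fin n → ZMod 2) :=
  D'.fold (· ∆ ·) ∅ ξ

/-- `E(S)`: the collection of all even zero-sum subsets of `S`, as a finset. -/
def evenZeroSums (n : ℕ) (S : Finset (Fin n → ZMod 2)) : Finset (Finset (Fin n → ZMod 2)) :=
  S.powerset.filter (fun Z => Even Z.card ∧ (∑ x ∈ Z, x) = 0)

section SymmDiffFold

variable {ι α : Type*} [DecidableEq α]

/-- The symmetric difference `△_{i ∈ s} f i` of a finite family of finite sets. For `ι = α = 𝔽₂ⁿ`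
it is `sumsetMap`. -/
def symmDiffFold (f : ι → Finset α) (s : Finset ι) : Finset α :=
  s.fold (· ∆ ·) ∅ f

lemma symmDiffFold_insert [DecidableEq ι] {f : ι → Finset α} {i : ι} {s : Finset ι}
    (hi : i ∉ s) : symmDiffFold f (insert i s) = f i ∆ symmDiffFold f s :=
  Finset.fold_insert hi

lemma mem_symmDiffFold_iff_odd {f : ι → Finset α} {s : Finset ι} {x : α} :
    x ∈ symmDiffFold f s ↔ Odd (s.filter (x ∈ f ·)).card := by
  classical
  induction s using Finset.induction_on with
  | empty => simp [symmDiffFold]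
  | insert i s hi ih =>
    rw [symmDiffFold_insert hi, Finset.mem_symmDiff, ih, Finset.filter_insert]
    by_cases hx : x ∈ f i
    · simp [hx, hi, Nat.odd_add_one]
    · simp [hx]

lemma symmDiffFold_mem {𝓔 : Set (Finset α)} (hempty : ∅ ∈ 𝓔)
    (hsymmDiff : ∀ X ∈ 𝓔, ∀ Y ∈ 𝓔, X ∆ Y ∈ 𝓔) {f : ι → Finset α} {s : Finset ι}
    (hf : ∀ i ∈ s, f i ∈ 𝓔) : symmDiffFold f s ∈ 𝓔 := by
  classical
  induction s using Finset.induction_on with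
  | empty => exact hempty
  | insert i s hi ih =>
    rw [Finset.forall_mem_insert] at hf
    rw [symmDiffFold_insert hi]
    exact hsymmDiff _ hf.1 _ (ih hf.2)

lemma mem_symmDiffFold_iff_mem {ξ : α → Finset α} {s : Finset α} {x : α}
    (hξ : ∀ w ∈ s, x ∈ ξ w ↔ x = w) : x ∈ symmDiffFold ξ s ↔ x ∈ s := by
  rw [mem_symmDiffFold_iff_odd, Finset.filter_congr hξ, Finset.filter_eq]
  split_ifs with hx <;> simp [hx]

/-- In linear-algebra terms, `𝓔` is a subspace of the space of finite sets, restriction to the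
coordinates in `D` is injective on `𝓔`, and it sends each `ξ w` to the unit vector at `w`. -/
lemma bijOn_symmDiffFold {𝓔 : Set (Finset α)} (hempty : ∅ ∈ 𝓔)
    (hsymmDiff : ∀ X ∈ 𝓔, ∀ Y ∈ 𝓔, X ∆ Y ∈ 𝓔) {D : Set α}
    (hdisjoint : ∀ X ∈ 𝓔, Disjoint (X : Set α) D → X = ∅) {ξ : α → Finset α}
    (hξ : ∀ w ∈ D, ξ w ∈ 𝓔) (hξD : ∀ w ∈ D, ∀ x ∈ D, x ∈ ξ w ↔ x = w) :
    Set.BijOn (symmDiffFold ξ) {D' | (D' : Set α) ⊆ D} 𝓔 := by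
  classical
  have mem_iff {D' : Finset α} (hD' : (D' : Set α) ⊆ D) {x : α} (hx : x ∈ D) :
      x ∈ symmDiffFold ξ D' ↔ x ∈ D' :=
    mem_symmDiffFold_iff_mem fun w hw => hξD w (hD' hw) x hx
  have mapsTo {D' : Finset α} (hD' : (D' : Set α) ⊆ D) : symmDiffFold ξ D' ∈ 𝓔 :=
    symmDiffFold_mem hempty hsymmDiff fun w hw => hξ w (hD' hw)
  refine ⟨fun D' hD' => mapsTo hD', fun D₁ h₁ D₂ h₂ heq => ?_, fun Z hZ => ?_⟩
  · have hmem (x : α) (hx : x ∈ D) : x ∈ D₁ ↔ x ∈ D₂ := by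
      rw [← mem_iff h₁ hx, heq, mem_iff h₂ hx]
    exact Finset.ext fun x =>
      ⟨fun hx => (hmem x (h₁ hx)).1 hx, fun hx => (hmem x (h₂ hx)).2 hx⟩
  · have hsub : (Z.filter (· ∈ D) : Set α) ⊆ D := fun x hx => (Finset.mem_filter.1 hx).2
    have hdiff : Disjoint (↑(symmDiffFold ξ (Z.filter (· ∈ D)) ∆ Z) : Set α) D := by
      refine Set.disjoint_left.2 fun x hx hxD => ?_
      rw [Finset.mem_coe, Finset.mem_symmDiff, mem_iff hsub hxD, Finset.mem_filter] at hx
      tauto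
    exact ⟨_, hsub, symmDiff_eq_bot.1 (hdisjoint _ (hsymmDiff _ (mapsTo hsub) _ hZ) hdiff)⟩

end SymmDiffFold

section EvenZeroSum

variable {V : Type*} [AddCommGroup V]

/-- `E(S)` for a possibly infinite subset `S` of an arbitrary abelian group: the finite subsets of
`S` with even cardinality and zero sum. -/
def evenZeroSumSets (S : Set V) : Set (Finset V) :=
  {X | (X : Set V) ⊆ S ∧ Even X.card ∧ ∑ x ∈ X, x = 0}

lemma coe_evenZeroSums (n : ℕ) (S : Finset (Fin n → ZMod 2)) :
    (evenZeroSums n S : Set (Finset (Fin n → ZMod 2))) = evenZeroSumSets S := by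
  ext Z
  simp [evenZeroSums, evenZeroSumSets]

lemma empty_mem_evenZeroSumSets (S : Set V) : ∅ ∈ evenZeroSumSets S := by
  simp [evenZeroSumSets]

variable [Module (ZMod 2) V]

lemma sum_symmDiff_of_zmod_two {α : Type*} [DecidableEq α] (f : α → V) (s t : Finset α) :
    ∑ x ∈ s ∆ t, f x = ∑ x ∈ s, f x + ∑ x ∈ t, f x := by
  calc ∑ x ∈ s ∆ t, f x = ∑ x ∈ s \ t, f x + ∑ x ∈ t \ s, f x :=
        Finset.sum_union disjoint_sdiff_sdiff
    _ = (∑ x ∈ s ∩ t, f x + ∑ x ∈ s ∩ t, f x)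
          + (∑ x ∈ s \ t, f x + ∑ x ∈ t \ s, f x) := by
        rw [ZModModule.add_self, zero_add]
    _ = ∑ x ∈ s, f x + ∑ x ∈ t, f x := by
        rw [← Finset.sum_inter_add_sum_sdiff s t f, ← Finset.sum_inter_add_sum_sdiff t s f,
          Finset.inter_comm t s]
        abel

lemma even_card_symmDiff {α : Type*} [DecidableEq α] {s t : Finset α} (hs : Even s.card)
    (ht : Even t.card) : Even (s ∆ t).card := by
  have h := sum_symmDiff_of_zmod_two (fun _ => (1 : ZMod 2)) s t
  simp only [Finset.sum_const, nsmul_eq_mul, mul_one] at h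
  rw [← ZMod.natCast_eq_zero_iff_even] at hs ht ⊢
  rw [h, hs, ht, add_zero]

lemma symmDiff_mem_evenZeroSumSets [DecidableEq V] {S : Set V} {X Y : Finset V}
    (hX : X ∈ evenZeroSumSets S) (hY : Y ∈ evenZeroSumSets S) : X ∆ Y ∈ evenZeroSumSets S := by
  obtain ⟨hXS, hXeven, hXsum⟩ := hX
  obtain ⟨hYS, hYeven, hYsum⟩ := hY
  refine ⟨fun x hx => ?_, even_card_symmDiff hXeven hYeven, ?_⟩
  · exact (Finset.mem_symmDiff.1 hx).elim (fun h => hXS h.1) (fun h => hYS h.1)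
  · rw [sum_symmDiff_of_zmod_two, hXsum, hYsum, add_zero]

lemma eq_empty_of_mem_evenZeroSumSets_of_affineIndependent {B : Set V}
    (hB : AffineIndependent (ZMod 2) ((↑) : B → V)) {X : Finset V}
    (hX : X ∈ evenZeroSumSets B) : X = ∅ := by
  classical
  obtain ⟨hXB, hXeven, hXsum⟩ := hX
  have hweights : ∑ _x ∈ X.subtype (· ∈ B), (1 : ZMod 2) = 0 := by
    rw [Finset.sum_subtype_of_mem (fun _ => (1 : ZMod 2)) hXB]
    simpa using ZMod.natCast_eq_zero_iff_even.2 hXeven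
  have hcomb : ∑ x ∈ X.subtype (· ∈ B), (1 : ZMod 2) • (x : V) = 0 := by
    simp only [one_smul]
    rw [Finset.sum_subtype_of_mem (fun x => x) hXB, hXsum]
  refine Finset.eq_empty_of_forall_notMem fun x hx => one_ne_zero (α := ZMod 2) ?_
  exact affineIndependent_iff.1 hB _ _ hweights hcomb ⟨x, hXB hx⟩ (Finset.mem_subtype.2 hx)

end EvenZeroSum

section FundamentalCircuit

variable {V : Type*} [AddCommGroup V] [DecidableEq V] {B : Set V} {w x : V} {X : Finset V}

/-- `X = {w} ∪ B_w` for an odd set `B_w ⊆ B` with sum `w`. In the binary affine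
matroid, `X` is the fundamental circuit of `w` with respect to the basis `B`. The set `B_w` is
encoded as `X.erase w`. -/
structure IsFundamentalCircuit (B : Set V) (w : V) (X : Finset V) : Prop where
  mem : w ∈ X
  subset_insert : (X : Set V) ⊆ insert w B
  odd_card_erase : Odd (X.erase w).card
  sum_erase : ∑ x ∈ X.erase w, x = w

namespace IsFundamentalCircuit

lemma mem_iff_eq (hX : IsFundamentalCircuit B w X) (hx : x ∉ B) : x ∈ X ↔ x = w :=
  ⟨fun h => (hX.subset_insert h).resolve_right hx, fun h => h ▸ hX.mem⟩

lemma mem_evenZeroSumSets [Module (ZMod 2) V] (hX : IsFundamentalCircuit B w X) :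
    X ∈ evenZeroSumSets (insert w B) := by
  refine ⟨hX.subset_insert, ?_, ?_⟩
  · rw [← Finset.card_erase_add_one hX.mem]
    exact hX.odd_card_erase.add_one
  · rw [← Finset.sum_erase_add _ _ hX.mem, hX.sum_erase, ZModModule.add_self]

end IsFundamentalCircuit

lemma bijOn_symmDiffFold_evenZeroSumSets [Module (ZMod 2) V] {D : Set V} (hBD : Disjoint B D)
    (hB : AffineIndependent (ZMod 2) ((↑) : B → V)) {ξ : V → Finset V}
    (hξ : ∀ w ∈ D, IsFundamentalCircuit B w (ξ w)) :
    Set.BijOn (symmDiffFold ξ) {D' | (D' : Set V) ⊆ D} (evenZeroSumSets (B ∪ D)) := by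
  refine bijOn_symmDiffFold (empty_mem_evenZeroSumSets _)
    (fun X hX Y hY => symmDiff_mem_evenZeroSumSets hX hY) (fun X hX hXD => ?_)
    (fun w hw => ?_) (fun w hw x hx => (hξ w hw).mem_iff_eq (Set.disjoint_right.1 hBD hx))
  · exact eq_empty_of_mem_evenZeroSumSets_of_affineIndependent hB
      ⟨hXD.subset_left_of_subset_union hX.1, hX.2⟩
  · obtain ⟨hsub, hX⟩ := (hξ w hw).mem_evenZeroSumSets
    exact ⟨hsub.trans (Set.insert_subset (Or.inr hw) Set.subset_union_left), hX⟩

end FundamentalCircuit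

section Dimension

variable {K V P : Type*} [DivisionRing K] [AddCommGroup V] [Module K V] [AddTorsor V P]

/-- For empty `S` both sides are `0`, the left one by truncated subtraction. -/
lemma ncard_sub_finrank_direction_add_one {S B : Set P} (hS : S.Finite) (hBS : B ⊆ S)
    (hB : AffineIndependent K ((↑) : B → P)) (hspan : S ⊆ affineSpan K B) :
    S.ncard - (Module.finrank K (affineSpan K S).direction + 1) = (S \ B).ncard := by
  rcases B.eq_empty_or_nonempty with rfl | hBne
  · have hSempty : S = ∅ := by simpa using hspan
    simp [hSempty]
  have := (hS.subset hBS).fintype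
  have := hBne.to_subtype
  have hdim : Module.finrank K (affineSpan K S).direction + 1 = B.ncard := by
    rw [(affineSpan_le.2 hspan).antisymm (affineSpan_mono K hBS), direction_affineSpan,
      ← Nat.card_coe_set_eq, Nat.card_eq_fintype_card, ← hB.finrank_vectorSpan_add_one,
      Subtype.range_coe]
  rw [hdim, Set.ncard_sdiff hBS (hS.subset hBS)]

end Dimension

theorem stmt_15_general {V : Type*} [AddCommGroup V] [Module (ZMod 2) V] [DecidableEq V]
    {S B D : Set V} (hSBD : S = B ∪ D) (hBD : Disjoint B D)
    (hB : AffineIndependent (ZMod 2) ((↑) : B → V)) (hspan : S ⊆ affineSpan (ZMod 2) B)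
    {ξ : V → Finset V} (hξ : ∀ w ∈ D, IsFundamentalCircuit B w (ξ w)) :
    Set.BijOn (symmDiffFold ξ) {D' | (D' : Set V) ⊆ D} (evenZeroSumSets S) ∧
    (S.Finite → (evenZeroSumSets S).ncard =
      2 ^ (S.ncard - (Module.finrank (ZMod 2) (affineSpan (ZMod 2) S).direction + 1))) := by
  subst hSBD
  have hbij := bijOn_symmDiffFold_evenZeroSumSets hBD hB hξ
  refine ⟨hbij, fun hS => ?_⟩
  lift D to Finset V using hS.subset Set.subset_union_right
  have hpowerset : {D' : Finset V | (D' : Set V) ⊆ D} = D.powerset := by ext; simp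
  rw [ncard_sub_finrank_direction_add_one hS Set.subset_union_left hB hspan,
    Set.union_sdiff_cancel_left hBD.le_bot, Set.ncard_coe_finset, ← hbij.image_eq,
    hbij.injOn.ncard_image, hpowerset, Set.ncard_coe_finset, Finset.card_powerset]

/-- Let `S = B ⊔ D ⊆ 𝔽₂ⁿ` be finite with affine basis `B` and `D = S \ B`, with
`|S| = k` and `dim S = d` (the dimension of the affine span of `S`).  Then the family
`{X_w : w ∈ D}` (encoded by `ξ`) is a basis for `E(S)` over `𝔽₂`: the sumset map
`D' ↦ △_{w ∈ D'} X_w` is a bijection from `𝒫(D)` onto `E(S)`; and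
`dim E(S) = k − (d + 1)`, i.e. `|E(S)| = 2 ^ (k − (d + 1))`. -/
theorem stmt_15 (n k d : ℕ) (S B D : Finset (Fin n → ZMod 2))
    (hSBD : S = B ∪ D) (hdisj : Disjoint B D)
    (hind : AffineIndependent (ZMod 2)
      (fun x : (B : Set (Fin n → ZMod 2)) => (x : Fin n → ZMod 2)))
    (hspan : ∀ x ∈ S, x ∈ affineSpan (ZMod 2) (B : Set (Fin n → ZMod 2)))
    (hk : S.card = k)
    (hd : Module.finrank (ZMod 2)
      (affineSpan (ZMod 2) (S : Set (Fin n → ZMod 2))).direction = d)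
    (ξ : (Fin n → ZMod 2) → Finset (Fin n → ZMod 2))
    (hξ : ∀ w ∈ D, w ∈ ξ w ∧ ξ w ⊆ insert w B ∧
      Odd ((ξ w).erase w).card ∧ (∑ x ∈ (ξ w).erase w, x) = w) :
    (∀ D' ⊆ D, sumsetMap ξ D' ∈ evenZeroSums n S) ∧
    (∀ D₁ ⊆ D, ∀ D₂ ⊆ D, sumsetMap ξ D₁ = sumsetMap ξ D₂ → D₁ = D₂) ∧
    (∀ Z ∈ evenZeroSums n S, ∃ D' ⊆ D, sumsetMap ξ D' = Z) ∧
    (evenZeroSums n S).card = 2 ^ (k - (d + 1)) := by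
  obtain ⟨⟨hmaps, hinj, hsurj⟩, hcard⟩ := stmt_15_general (S := ↑S) (ξ := ξ)
    (by rw [hSBD, Finset.coe_union]) (Finset.disjoint_coe.2 hdisj) hind
    (fun x hx => hspan x hx) fun w hw =>
      have ⟨hmem, hsub, hodd, hsum⟩ := hξ w hw
      ⟨hmem, mod_cast hsub, hodd, hsum⟩
  rw [← coe_evenZeroSums] at hmaps hsurj hcard
  rw [Set.ncard_coe_finset, Set.ncard_coe_finset, hk, hd] at hcard
  exact ⟨@hmaps, fun _ h₁ _ h₂ => hinj h₁ h₂, @hsurj, hcard S.finite_toSet⟩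
end
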